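/- arXiv:1702.05426 — 4 statements merged into one kernel-verified Lean document; each statement's English description precedes it below -/
import Mathlib

section
/- Let α, β be real numbers with β > 0 and 1 < α ≤ β + 1, and let V_{α,β}(t) = ∑_{p prime} p^{−α} cos(2π p^β t). Then for every t₀ ∈ ℝ, every local Hölder exponent of V_{α,β} at t₀ is at most α/β: if s ∈ (0,1] and there exist ε > 0 and C > 0 such that |V_{α,β}(x) − V_{α,β}(y)| ≤ C·|x − y|^s for all x, y with |x − t₀| < ε and |y − t₀| < ε, then s ≤ α/β. -/
open MeasureTheory Filter Topology FourierTransform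
open scoped ContDiff

lemma aux_bump (t₀ r : ℝ) (hr : 0 < r) : ∃ φ : ℝ → ℝ, ∃ L : ℝ, Continuous φ ∧ HasCompactSupport φ ∧
    (∀ t, r ≤ |t - t₀| → φ t = 0) ∧ (∀ t, |φ t| ≤ 1) ∧ (0 < ∫ t, φ t) ∧ 0 ≤ L ∧
    (∀ x y, |φ x - φ y| ≤ L * |x - y|) ∧
    ∀ N : ℕ, ∃ D : ℝ, ∀ x : ℝ, |x| ^ N * ‖𝓕 (fun t => (φ t : ℂ)) x‖ ≤ D := by
  let b : ContDiffBump t₀ := ⟨r / 2, r, by positivity, by linarith⟩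
  obtain ⟨K, hK⟩ := (b.contDiff (n := 1)).lipschitzWith_of_hasCompactSupport b.hasCompactSupport (by norm_num)
  refine ⟨b, K, b.continuous, b.hasCompactSupport, ?_, ?_, b.integral_pos, K.2, ?_, ?_⟩
  · intro t ht
    exact b.zero_of_le_dist (by simpa [Real.dist_eq] using ht)
  · intro t
    rw [abs_of_nonneg b.nonneg]; exact b.le_one
  · intro x y
    simpa [Real.dist_eq] using hK.dist_le_mul x y
  · intro N
    have h1 : HasCompactSupport (fun t => (b t : ℂ)) :=
      b.hasCompactSupport.comp_left (g := fun x : ℝ => (x : ℂ)) (by simp)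
    have h2 : ContDiff ℝ ∞ (fun t => (b t : ℂ)) := Complex.ofRealCLM.contDiff.comp b.contDiff
    obtain ⟨D, hD⟩ := (𝓕 (h1.toSchwartzMap h2)).decay' N 0
    refine ⟨D, fun x => ?_⟩
    have := hD x
    simp only [norm_iteratedFDeriv_zero] at this
    exact this

lemma aux_gap (β : ℝ) (hβ : 1 ≤ β) (x y : ℝ) (hy : 0 < y) (hxy : y + 1 ≤ x) :
    x ^ (β - 1) ≤ x ^ β - y ^ β := by
  have hx : 0 < x := by linarith
  have e1 : x ^ β = x ^ (β - 1) * x := by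
    rw [← Real.rpow_add_one hx.ne']; congr 1; ring
  have e2 : y ^ β = y ^ (β - 1) * y := by
    rw [← Real.rpow_add_one hy.ne']; congr 1; ring
  have h3 : y ^ (β - 1) ≤ x ^ (β - 1) := Real.rpow_le_rpow hy.le (by linarith) (by linarith)
  have h4 : 0 ≤ x ^ (β - 1) := by positivity
  rw [e1, e2]; nlinarith

lemma aux_gap2 (β : ℝ) (hβ : 1 ≤ β) (p q : ℕ) (hp : 0 < p) (hq : 0 < q) (hpq : p ≠ q) :
    (p : ℝ) ^ (β - 1) ≤ |(p : ℝ) ^ β - (q : ℝ) ^ β| := by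
  have hp' : (0 : ℝ) < p := by exact_mod_cast hp
  have hq' : (0 : ℝ) < q := by exact_mod_cast hq
  rcases lt_or_gt_of_ne hpq with h | h
  · have h' : (p : ℝ) + 1 ≤ q := by exact_mod_cast h
    have := aux_gap β hβ q p hp' h'
    have h3 : (p : ℝ) ^ (β - 1) ≤ (q : ℝ) ^ (β - 1) :=
      Real.rpow_le_rpow hp'.le (by linarith) (by linarith)
    rw [abs_sub_comm]
    exact (h3.trans this).trans (le_abs_self _)
  · have h' : (q : ℝ) + 1 ≤ p := by exact_mod_cast h
    exact (aux_gap β hβ p q hq' h').trans (le_abs_self _)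

lemma aux_holder (g : ℝ → ℂ) (hg : Integrable g) (t₀ ε K s η : ℝ) (hε : 0 < ε) (hη : 0 < η)
    (hsupp : ∀ h t, |h| ≤ η → ε ≤ |t - t₀| → g t - g (t + h) = 0)
    (hK : ∀ h t, |h| ≤ η → ‖g t - g (t + h)‖ ≤ K * |h| ^ s) (w : ℝ) (hw : 0 < w)
    (hwη : 1 / (2 * w) ≤ η) : ‖𝓕 g w‖ ≤ ε * K * (1 / (2 * w)) ^ s := by
  have hE := fourierIntegral_eq_half_sub_half_period_translate (f := g) hw.ne' hg
  have hi : (1 / (2 * ‖w‖ ^ 2)) • w = 1 / (2 * w) := by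
    rw [Real.norm_of_nonneg hw.le, smul_eq_mul]; field_simp
  simp only [hi] at hE
  rw [Real.fourier_eq, hE, norm_smul]
  have hh : |1 / (2 * w)| = 1 / (2 * w) := abs_of_pos (by positivity)
  have : ∫ v : ℝ, Real.fourierChar (-inner ℝ v w) • (g v - g (v + 1 / (2 * w))) =
      ∫ v in Metric.ball t₀ ε, Real.fourierChar (-inner ℝ v w) • (g v - g (v + 1 / (2 * w))) := by
    symm
    apply setIntegral_eq_integral_of_forall_compl_eq_zero
    intro x hx
    rw [hsupp _ _ (hh.trans_le hwη) (by simpa [Real.dist_eq] using hx), smul_zero]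
  rw [this]
  have h2 := norm_setIntegral_le_of_norm_le_const (μ := volume) (s := Metric.ball t₀ ε)
    (f := fun v : ℝ => Real.fourierChar (-inner ℝ v w) • (g v - g (v + 1 / (2 * w))))
    (C := K * (1 / (2 * w)) ^ s) measure_ball_lt_top (by
      intro x _
      rw [Circle.norm_smul]
      have := hK (1 / (2 * w)) x (hh.trans_le hwη)
      rwa [hh] at this)
  have h3 : volume.real (Metric.ball t₀ ε) = 2 * ε := by
    simp [Measure.real, ENNReal.toReal_ofReal, hε.le]
  rw [h3] at h2
  calc _ ≤ ‖(1 / (2 : ℂ))‖ * (K * (1 / (2 * w)) ^ s * (2 * ε)) := by gcongr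
    _ = _ := by norm_num; ring

lemma aux_cos (φ : ℝ → ℝ) (hφ : Continuous φ) (hc : HasCompactSupport φ) (a μ w : ℝ) :
    ∫ t : ℝ, Complex.exp (↑(-2 * Real.pi * t * w) * Complex.I) *
      (((a * Real.cos (2 * Real.pi * μ * t)) : ℝ) * (φ t : ℂ)) =
    (a : ℂ) / 2 * (𝓕 (fun t => (φ t : ℂ)) (w - μ) + 𝓕 (fun t => (φ t : ℂ)) (w + μ)) := by
  have hint : ∀ w : ℝ, Integrable (fun t : ℝ => Complex.exp (↑(-2 * Real.pi * t * w) * Complex.I) * (φ t : ℂ)) := by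
    intro w
    apply Continuous.integrable_of_hasCompactSupport
    · fun_prop
    · exact (hc.comp_left (g := fun x : ℝ => (x : ℂ)) (by simp)).mul_left
  simp only [Real.fourier_real_eq_integral_exp_smul, smul_eq_mul]
  rw [← integral_add (hint _) (hint _), ← integral_const_mul]
  congr 1
  ext t
  push_cast
  have e1 : Complex.exp (-2 * Real.pi * t * (w - μ) * Complex.I) =
    Complex.exp (-2 * Real.pi * t * w * Complex.I) * Complex.exp (2 * Real.pi * μ * t * Complex.I) := by
    rw [← Complex.exp_add]; congr 1; ring
  have e2 : Complex.exp (-2 * Real.pi * t * (w + μ) * Complex.I) =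
    Complex.exp (-2 * Real.pi * t * w * Complex.I) * Complex.exp (-(2 * Real.pi * μ * t) * Complex.I) := by
    rw [← Complex.exp_add]; congr 1; ring
  rw [e1, e2, Complex.cos]
  ring

lemma aux_sum (φ : ℝ → ℝ) (hφ : Continuous φ) (hc : HasCompactSupport φ)
    {ι : Type*} [Countable ι] (a μ : ι → ℝ) (ha : Summable a) (ha0 : ∀ i, 0 ≤ a i) (w : ℝ) :
    HasSum (fun i => (a i : ℂ) / 2 *
      (𝓕 (fun t => (φ t : ℂ)) (w - μ i) + 𝓕 (fun t => (φ t : ℂ)) (w + μ i)))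
      (𝓕 (fun t => (((∑' i, a i * Real.cos (2 * Real.pi * μ i * t)) * φ t : ℝ) : ℂ)) w) := by
  have hI : Integrable φ := hφ.integrable_of_hasCompactSupport hc
  have hb : ∀ i t, ‖Complex.exp (↑(-2 * Real.pi * t * w) * Complex.I) *
      (((a i * Real.cos (2 * Real.pi * μ i * t)) : ℝ) * (φ t : ℂ))‖ ≤ a i * |φ t| := by
    intro i t
    rw [norm_mul, Complex.norm_exp_ofReal_mul_I, one_mul, norm_mul, Complex.norm_real,
      Complex.norm_real, Real.norm_eq_abs, Real.norm_eq_abs, abs_mul, abs_of_nonneg (ha0 i)]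
    gcongr
    exact mul_le_of_le_one_right (ha0 i) (Real.abs_cos_le_one _)
  have hint : ∀ i, Integrable (fun t : ℝ => Complex.exp (↑(-2 * Real.pi * t * w) * Complex.I) *
      (((a i * Real.cos (2 * Real.pi * μ i * t)) : ℝ) * (φ t : ℂ))) := by
    intro i
    apply Integrable.mono' (hI.abs.const_mul (a i))
    · exact (by fun_prop : Continuous _).aestronglyMeasurable
    · exact .of_forall (hb i)
  have := hasSum_integral_of_summable_integral_norm hint (by
    apply Summable.of_nonneg_of_le (fun i => integral_nonneg fun t => norm_nonneg _) (fun i => ?_)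
      (ha.mul_right (∫ t, |φ t|))
    rw [← integral_const_mul]
    exact integral_mono (hint i).norm (hI.abs.const_mul _) (hb i))
  simp only [aux_cos φ hφ hc] at this
  convert! this using 1
  rw [Real.fourier_real_eq_integral_exp_smul]
  congr 1
  ext t
  rw [tsum_mul_left, tsum_mul_right, smul_eq_mul]
  push_cast
  rfl

lemma aux_prod (V φ : ℝ → ℝ) (t₀ ε C S L s : ℝ) (hε : 0 < ε) (hC : 0 < C) (hS : ∀ t, |V t| ≤ S)
    (hs : s ∈ Set.Ioc (0 : ℝ) 1)
    (hV : ∀ x y : ℝ, |x - t₀| < ε → |y - t₀| < ε → |V x - V y| ≤ C * |x - y| ^ s)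
    (hsupp : ∀ t, ε / 2 ≤ |t - t₀| → φ t = 0) (hφ1 : ∀ t, |φ t| ≤ 1) (hL : 0 ≤ L)
    (hLip : ∀ x y, |φ x - φ y| ≤ L * |x - y|) (h t : ℝ) (hh : |h| ≤ min (ε / 2) 1) :
    (ε ≤ |t - t₀| → V t * φ t - V (t + h) * φ (t + h) = 0) ∧
    |V t * φ t - V (t + h) * φ (t + h)| ≤ (C + S * L) * |h| ^ s := by
  have hS0 : 0 ≤ S := (abs_nonneg _).trans (hS 0)
  obtain ⟨hh1, hh2⟩ := le_min_iff.1 hh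
  have hhs : 0 ≤ |h| ^ s := by positivity
  have hhs1 : |h| ≤ |h| ^ s := by
    simpa using Real.rpow_le_rpow_of_exponent_ge' (abs_nonneg h) hh2 hs.1.le hs.2
  have tri : |t - t₀| ≤ |t + h - t₀| + |h| := by
    have := abs_sub (t + h - t₀) h
    rwa [show t + h - t₀ - h = t - t₀ by ring] at this
  have tri2 : |t + h - t₀| ≤ |t - t₀| + |h| := by
    have := abs_add_le (t - t₀) h
    rwa [show t - t₀ + h = t + h - t₀ by ring] at this
  have hz1 : ε ≤ |t - t₀| → V t * φ t - V (t + h) * φ (t + h) = 0 := by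
    intro h1
    rw [hsupp t (by linarith), hsupp (t + h) (by linarith)]; simp
  refine ⟨hz1, ?_⟩
  have hnn : 0 ≤ (C + S * L) * |h| ^ s := by positivity
  by_cases h1 : ε ≤ |t - t₀|
  · rw [hz1 h1, abs_zero]; exact hnn
  by_cases h2 : ε ≤ |t + h - t₀|
  · rw [hsupp t (by linarith), hsupp (t + h) (by linarith)]; simpa using hnn
  push Not at h1 h2
  have hv := hV t (t + h) h1 h2
  have hl := hLip t (t + h)
  rw [show t - (t + h) = -h by ring, abs_neg] at hv hl
  calc |V t * φ t - V (t + h) * φ (t + h)|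
      = |(V t - V (t + h)) * φ t + V (t + h) * (φ t - φ (t + h))| := by congr 1; ring
    _ ≤ |V t - V (t + h)| * |φ t| + |V (t + h)| * |φ t - φ (t + h)| := by
        rw [← abs_mul, ← abs_mul]; exact abs_add_le _ _
    _ ≤ (C * |h| ^ s) * 1 + S * (L * |h|) := by
        gcongr
        · exact hφ1 t
        · exact hS _
    _ ≤ (C * |h| ^ s) * 1 + S * (L * |h| ^ s) := by gcongr
    _ = _ := by ring

lemma aux_main (α β : ℝ) (hα : 1 < α) (hβ1 : 1 < β) (F : ℝ → ℂ) (N : ℕ) (D : ℝ)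
    (hD : ∀ x : ℝ, |x| ^ N * ‖F x‖ ≤ D) (p : Nat.Primes) (T : ℂ)
    (hT : HasSum (fun q : Nat.Primes => ((((q : ℕ) : ℝ) ^ (-α) : ℝ) : ℂ) / 2 *
      (F (((p : ℕ) : ℝ) ^ β - ((q : ℕ) : ℝ) ^ β) + F (((p : ℕ) : ℝ) ^ β + ((q : ℕ) : ℝ) ^ β))) T) :
    ((p : ℕ) : ℝ) ^ (-α) / 2 * ‖F 0‖ ≤ ‖T‖ +
      (∑' q : Nat.Primes, ((q : ℕ) : ℝ) ^ (-α)) * (D * ((p : ℕ) : ℝ) ^ (-((β - 1) * N))) := by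
  classical
  have hp0 : (0 : ℝ) < ((p : ℕ) : ℝ) := by exact_mod_cast p.2.pos
  have hsum : Summable (fun q : Nat.Primes => ((q : ℕ) : ℝ) ^ (-α)) :=
    Nat.Primes.summable_rpow.2 (by linarith)
  set d := D * ((p : ℕ) : ℝ) ^ (-((β - 1) * N)) with hd
  have hFd : ∀ x : ℝ, ((p : ℕ) : ℝ) ^ (β - 1) ≤ |x| → ‖F x‖ ≤ d := by
    intro x hx
    have h1 : (((p : ℕ) : ℝ) ^ (β - 1)) ^ N * ‖F x‖ ≤ D :=
      le_trans (by gcongr) (hD x)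
    rw [hd, Real.rpow_neg hp0.le, Real.rpow_mul hp0.le, Real.rpow_natCast, ← div_eq_mul_inv,
      le_div_iff₀ (by positivity)]
    linarith
  have hs1 := (hasSum_ite_eq p (((((p : ℕ) : ℝ) ^ (-α) : ℝ) : ℂ) / 2 * F 0))
  have hdiff := hT.sub hs1
  have hd0 : 0 ≤ d := (norm_nonneg _).trans (hFd (((p : ℕ) : ℝ) ^ (β - 1)) (le_abs_self _))
  have hplus : ∀ q : Nat.Primes, ‖F (((p : ℕ) : ℝ) ^ β + ((q : ℕ) : ℝ) ^ β)‖ ≤ d := by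
    intro q
    apply hFd
    have h1 : ((p : ℕ) : ℝ) ^ (β - 1) ≤ ((p : ℕ) : ℝ) ^ β :=
      Real.rpow_le_rpow_of_exponent_le (by exact_mod_cast p.2.one_lt.le) (by linarith)
    have h2 : 0 ≤ ((q : ℕ) : ℝ) ^ β := by positivity
    exact le_trans (by linarith) (le_abs_self _)
  have hterm : ∀ q : Nat.Primes, ‖((((q : ℕ) : ℝ) ^ (-α) : ℝ) : ℂ) / 2 *
      (F (((p : ℕ) : ℝ) ^ β - ((q : ℕ) : ℝ) ^ β) + F (((p : ℕ) : ℝ) ^ β + ((q : ℕ) : ℝ) ^ β)) -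
      (if q = p then ((((p : ℕ) : ℝ) ^ (-α) : ℝ) : ℂ) / 2 * F 0 else 0)‖ ≤
      ((q : ℕ) : ℝ) ^ (-α) * d := by
    intro q
    have hq0 : 0 ≤ ((q : ℕ) : ℝ) ^ (-α) := by positivity
    have hn : ‖((((q : ℕ) : ℝ) ^ (-α) : ℝ) : ℂ) / 2‖ = ((q : ℕ) : ℝ) ^ (-α) / 2 := by
      rw [norm_div, Complex.norm_real, Real.norm_of_nonneg hq0]; norm_num
    by_cases hqp : q = p
    · subst hqp
      simp only [if_true, sub_self]
      rw [mul_add, add_sub_cancel_left, norm_mul, hn]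
      have := hplus q
      nlinarith [mul_le_mul_of_nonneg_left this hq0, mul_nonneg hq0 hd0]
    · rw [if_neg hqp, sub_zero, norm_mul, hn]
      have h1 := hplus q
      have h2 := hFd _ (aux_gap2 β hβ1.le p q p.2.pos q.2.pos
        (fun h => hqp (Subtype.ext h.symm)))
      calc _ ≤ ((q : ℕ) : ℝ) ^ (-α) / 2 * (d + d) := by
            gcongr; exact (norm_add_le _ _).trans (add_le_add h2 h1)
        _ = _ := by ring
  have hb := tsum_of_norm_bounded (hsum.mul_right d).hasSum hterm
  rw [hdiff.tsum_eq, tsum_mul_right] at hb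
  have hn : ‖((((p : ℕ) : ℝ) ^ (-α) : ℝ) : ℂ) / 2 * F 0‖ = ((p : ℕ) : ℝ) ^ (-α) / 2 * ‖F 0‖ := by
    rw [norm_mul, norm_div, Complex.norm_real, Real.norm_of_nonneg (by positivity)]; norm_num
  rw [← hn]
  have := norm_sub_norm_le (((((p : ℕ) : ℝ) ^ (-α) : ℝ) : ℂ) / 2 * F 0) T
  rw [norm_sub_rev] at this
  linarith


/-- For `β > 0` and `1 < α ≤ β + 1`, every local Hölder exponent of
`V_{α,β}(t) = ∑_{p prime} p^{-α} cos(2π p^β t)` at any point `t₀` is at most `α/β`. -/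
theorem prime_power_cos_series_holder_exponent_le (α β : ℝ) (hβ : 0 < β) (hα : 1 < α)
    (hαβ : α ≤ β + 1) (t₀ : ℝ) (s : ℝ) (hs : s ∈ Set.Ioc (0 : ℝ) 1)
    (hholder : ∃ ε > (0 : ℝ), ∃ C > (0 : ℝ), ∀ x y : ℝ, |x - t₀| < ε → |y - t₀| < ε →
      |(∑' p : Nat.Primes,
          ((p : ℕ) : ℝ) ^ (-α) * Real.cos (2 * Real.pi * ((p : ℕ) : ℝ) ^ β * x)) -
        (∑' p : Nat.Primes,
          ((p : ℕ) : ℝ) ^ (-α) * Real.cos (2 * Real.pi * ((p : ℕ) : ℝ) ^ β * y))| ≤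
        C * |x - y| ^ s) :
    s ≤ α / β := by
  by_contra hcon
  push Not at hcon
  rw [div_lt_iff₀ hβ] at hcon
  have hβα : α < β := by nlinarith [hs.2]
  have hβ1 : 1 < β := by linarith
  obtain ⟨ε, hε, C, hC, hH⟩ := hholder
  obtain ⟨φ, L, hφ, hc, hsupp, hφ1, hpos, hL, hLip, hdec⟩ := aux_bump t₀ (ε / 2) (by positivity)
  obtain ⟨N, hN⟩ := exists_nat_gt (α / (β - 1))
  rw [div_lt_iff₀ (by linarith)] at hN
  obtain ⟨D, hD⟩ := hdec N
  set V : ℝ → ℝ := fun t => ∑' p : Nat.Primes,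
    ((p : ℕ) : ℝ) ^ (-α) * Real.cos (2 * Real.pi * ((p : ℕ) : ℝ) ^ β * t) with hVdef
  have hsum : Summable (fun q : Nat.Primes => ((q : ℕ) : ℝ) ^ (-α)) :=
    Nat.Primes.summable_rpow.2 (by linarith)
  set S := ∑' q : Nat.Primes, ((q : ℕ) : ℝ) ^ (-α) with hSdef
  have hterm : ∀ (p : Nat.Primes) (t : ℝ),
      ‖((p : ℕ) : ℝ) ^ (-α) * Real.cos (2 * Real.pi * ((p : ℕ) : ℝ) ^ β * t)‖ ≤
      ((p : ℕ) : ℝ) ^ (-α) := by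
    intro p t
    have h0 : 0 ≤ ((p : ℕ) : ℝ) ^ (-α) := by positivity
    rw [norm_mul, Real.norm_of_nonneg h0]
    exact mul_le_of_le_one_right h0 (Real.abs_cos_le_one _)
  have hVc : Continuous V := continuous_tsum (fun p => by fun_prop) hsum hterm
  have hVS : ∀ t, |V t| ≤ S := fun t => tsum_of_norm_bounded hsum.hasSum (fun p => hterm p t)
  have hP := aux_prod V φ t₀ ε C S L s hε hC hVS hs hH hsupp hφ1 hL hLip
  have hη : 0 < min (ε / 2) 1 := by positivity
  set g : ℝ → ℂ := fun t => ((V t * φ t : ℝ) : ℂ) with hg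
  have hgi : Integrable g := by
    apply Continuous.integrable_of_hasCompactSupport
    · fun_prop
    · exact (hc.mul_left (f := V)).comp_left (g := fun x : ℝ => (x : ℂ)) (by simp)
  have hdecay := aux_holder g hgi t₀ ε (C + S * L) s (min (ε / 2) 1) hε hη
    (fun h t hh ht => by
      simp only [hg]; rw [← Complex.ofReal_sub, (hP h t hh).1 ht, Complex.ofReal_zero])
    (fun h t hh => by
      simp only [hg]; rw [← Complex.ofReal_sub, Complex.norm_real]; exact (hP h t hh).2)
  set F := 𝓕 (fun t => (φ t : ℂ)) with hF
  have hF0 : 0 < ‖F 0‖ := by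
    have : F 0 = ((∫ t, φ t : ℝ) : ℂ) := by
      rw [hF, Real.fourier_real_eq_integral_exp_smul, ← integral_complex_ofReal]
      simp
    rw [this, Complex.norm_real]
    exact norm_pos_iff.2 hpos.ne'
  set A := ε * (C + S * L) * (1 / 2) ^ s with hA
  have key : ∀ p : Nat.Primes, 1 / (2 * ((p : ℕ) : ℝ) ^ β) ≤ min (ε / 2) 1 →
      ‖F 0‖ / 2 ≤ A * ((p : ℕ) : ℝ) ^ (-(s * β - α)) +
        S * D * ((p : ℕ) : ℝ) ^ (-((β - 1) * N - α)) := by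
    intro p hp
    have hp0 : (0 : ℝ) < ((p : ℕ) : ℝ) := by exact_mod_cast p.2.pos
    have h1 := hdecay (((p : ℕ) : ℝ) ^ β) (by positivity) hp
    have h2 := aux_main α β hα hβ1 F N D hD p _ (aux_sum φ hφ hc
      (fun q : Nat.Primes => ((q : ℕ) : ℝ) ^ (-α)) (fun q : Nat.Primes => ((q : ℕ) : ℝ) ^ β)
      hsum (fun q => by positivity) (((p : ℕ) : ℝ) ^ β))
    have h3 : ((p : ℕ) : ℝ) ^ (-α) / 2 * ‖F 0‖ ≤ ε * (C + S * L) * (1 / (2 * ((p : ℕ) : ℝ) ^ β)) ^ s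
      + S * (D * ((p : ℕ) : ℝ) ^ (-((β - 1) * N))) := by
      refine h2.trans ?_
      gcongr
    have e1 : (1 / (2 * ((p : ℕ) : ℝ) ^ β)) ^ s = (1 / 2) ^ s * ((p : ℕ) : ℝ) ^ (-(s * β)) := by
      rw [show 1 / (2 * ((p : ℕ) : ℝ) ^ β) = (1 / 2) * ((p : ℕ) : ℝ) ^ (-β) by
        rw [Real.rpow_neg hp0.le]; field_simp, Real.mul_rpow (by norm_num) (by positivity),
        ← Real.rpow_mul hp0.le]
      congr 2; ring
    rw [e1] at h3
    have h4 := mul_le_mul_of_nonneg_left h3 (by positivity : 0 ≤ ((p : ℕ) : ℝ) ^ α)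
    have e2 : ((p : ℕ) : ℝ) ^ α * ((p : ℕ) : ℝ) ^ (-α) = 1 := by
      rw [← Real.rpow_add hp0]; simp
    have e3 : ((p : ℕ) : ℝ) ^ (-(s * β - α)) = ((p : ℕ) : ℝ) ^ α * ((p : ℕ) : ℝ) ^ (-(s * β)) := by
      rw [← Real.rpow_add hp0]; congr 1; ring
    have e4 : ((p : ℕ) : ℝ) ^ (-((β - 1) * N - α)) =
        ((p : ℕ) : ℝ) ^ α * ((p : ℕ) : ℝ) ^ (-((β - 1) * N)) := by
      rw [← Real.rpow_add hp0]; congr 1; ring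
    rw [e3, e4]
    calc ‖F 0‖ / 2 = ((p : ℕ) : ℝ) ^ α * (((p : ℕ) : ℝ) ^ (-α) / 2 * ‖F 0‖) := by
          rw [← one_mul (‖F 0‖ / 2), ← e2]; ring
      _ ≤ _ := h4
      _ = _ := by rw [hA]; ring
  have l1 : Tendsto (fun n : ℕ => A * (n : ℝ) ^ (-(s * β - α)) +
        S * D * (n : ℝ) ^ (-((β - 1) * N - α))) atTop (𝓝 (A * 0 + S * D * 0)) := by
    apply Tendsto.add <;> apply Tendsto.const_mul
    · exact (tendsto_rpow_neg_atTop (by linarith)).comp tendsto_natCast_atTop_atTop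
    · exact (tendsto_rpow_neg_atTop (by linarith)).comp tendsto_natCast_atTop_atTop
  have l2 : Tendsto (fun n : ℕ => (1 / 2) * (n : ℝ) ^ (-β)) atTop (𝓝 ((1 / 2) * 0)) :=
    ((tendsto_rpow_neg_atTop hβ).comp tendsto_natCast_atTop_atTop).const_mul _
  have ev := (l1.eventually_lt_const (u := ‖F 0‖ / 2) (by simpa using hF0)).and
    (l2.eventually_lt_const (u := min (ε / 2) 1) (by simpa using hη))
  obtain ⟨n₀, hn₀⟩ := eventually_atTop.1 ev
  obtain ⟨p, hpn, hpp⟩ := Nat.exists_infinite_primes n₀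
  obtain ⟨c1, c2⟩ := hn₀ p hpn
  have := key ⟨p, hpp⟩ (by
    have : 1 / (2 * (p : ℝ) ^ β) = (1 / 2) * (p : ℝ) ^ (-β) := by
      rw [Real.rpow_neg (by positivity)]; field_simp
    change 1 / (2 * (p : ℝ) ^ β) ≤ _
    rw [this]; exact c2.le)
  change ‖F 0‖ / 2 ≤ A * (p : ℝ) ^ (-(s * β - α)) + S * D * (p : ℝ) ^ (-((β - 1) * N - α)) at this
  linarith
end

section
/- Let q be a prime number and define V_{1,1}(n, 1/q) = ∑_{p ≤ n, p prime} (1/p)·cos(2π p/q). Then V_{1,1}(n, 1/q) / (ln ln n) tends to −1/(q−1) as n → ∞. -/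
open Filter

theorem tauber (f : ℕ → ℝ) (hf : ∀ n, 0 ≤ f n) (c C : ℝ)
    (hs : ∀ x : ℝ, 1 < x → Summable fun n : ℕ => f n / (n : ℝ) ^ x)
    (hT : ∀ x : ℝ, 1 < x → x ≤ 2 →
      |(∑' n : ℕ, f n / (n : ℝ) ^ x) + c * Real.log (x - 1)| ≤ C) :
    Tendsto (fun N : ℕ => (∑ n ∈ Finset.range (N + 1), f n / n) / Real.log (Real.log N))
      atTop (nhds c) := by
  set T : ℝ → ℝ := fun x => ∑' n : ℕ, f n / (n : ℝ) ^ x with hTdef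
  have hL : Tendsto (fun N : ℕ => Real.log (N : ℝ)) atTop atTop :=
    Real.tendsto_log_atTop.comp tendsto_natCast_atTop_atTop
  have hLL : Tendsto (fun N : ℕ => Real.log (Real.log (N : ℝ))) atTop atTop :=
    Real.tendsto_log_atTop.comp hL
  -- estimates for T at 1 + K / L
  have hTK : ∀ K : ℝ, 0 < K → ∀ L : ℝ, K ≤ L → 0 < L →
      |T (1 + K / L) - c * (Real.log L - Real.log K)| ≤ C := by
    intro K hK L hKL hL0
    have h1 : 0 < K / L := by positivity
    have h2 : K / L ≤ 1 := (div_le_one hL0).2 hKL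
    have := hT (1 + K / L) (by linarith) (by linarith)
    rw [add_sub_cancel_left, Real.log_div hK.ne' hL0.ne'] at this
    convert this using 2
    simp only [hTdef]; ring
  have hup : ∀ e : ℝ, 0 < e → ∀ N : ℕ, 1 < N → e ≤ Real.log N →
      (∑ n ∈ Finset.range (N + 1), f n / n) ≤ Real.exp e * T (1 + e / Real.log N) := by
    intro e he N hN heN
    have hL0 : 0 < Real.log N := by linarith
    have hx : 1 < 1 + e / Real.log N := by
      have : 0 < e / Real.log N := by positivity
      linarith
    have hpt : ∀ n ∈ Finset.range (N + 1),
        f n / n ≤ Real.exp e * (f n / (n : ℝ) ^ (1 + e / Real.log N)) := by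
      intro n hn
      rcases Nat.eq_zero_or_pos n with rfl | hn0
      · simp only [Nat.cast_zero, div_zero]
        rw [Real.zero_rpow (by linarith)]; simp
      have hnp : (0 : ℝ) < n := by exact_mod_cast hn0
      have hle : Real.log n ≤ Real.log N :=
        Real.log_le_log hnp (by exact_mod_cast Nat.lt_succ_iff.1 (Finset.mem_range.1 hn))
      have h3 : (n : ℝ) ^ (e / Real.log N) ≤ Real.exp e := by
        rw [Real.rpow_def_of_pos hnp, Real.exp_le_exp]
        calc Real.log n * (e / Real.log N) ≤ Real.log N * (e / Real.log N) := by gcongr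
          _ = e := by field_simp
      rw [Real.rpow_add hnp, Real.rpow_one]
      have h4 : 0 < (n : ℝ) ^ (e / Real.log N) := Real.rpow_pos_of_pos hnp _
      rw [← div_div, mul_div_assoc', le_div_iff₀ h4, mul_comm]
      exact mul_le_mul_of_nonneg_right h3 (div_nonneg (hf n) hnp.le)
    calc _ ≤ ∑ n ∈ Finset.range (N + 1),
            Real.exp e * (f n / (n : ℝ) ^ (1 + e / Real.log N)) := Finset.sum_le_sum hpt
      _ = Real.exp e * ∑ n ∈ Finset.range (N + 1), (f n / (n : ℝ) ^ (1 + e / Real.log N)) := by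
            rw [Finset.mul_sum]
      _ ≤ _ := by
            gcongr
            exact (hs _ hx).sum_le_tsum _
              (fun n _ => div_nonneg (hf n) (Real.rpow_nonneg (Nat.cast_nonneg n) _))
  have hlo : ∀ K : ℝ, 0 < K → ∀ N : ℕ, 1 < N →
      T (1 + (2 * K) / Real.log N) - Real.exp (-K) * T (1 + K / Real.log N) ≤
      (∑ n ∈ Finset.range (N + 1), f n / n) := by
    intro K hK N hN
    have hL0 : 0 < Real.log N := Real.log_pos (by exact_mod_cast hN)
    have hs0 : 0 < K / Real.log N := by positivity
    have h2 : 2 * K / Real.log N = K / Real.log N + K / Real.log N := by ring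
    have hpt : ∀ n : ℕ, f n / (n : ℝ) ^ (1 + (2 * K) / Real.log N) ≤
        (if n ∈ Finset.range (N + 1) then f n / n else 0) +
          Real.exp (-K) * (f n / (n : ℝ) ^ (1 + K / Real.log N)) := by
      intro n
      rcases Nat.eq_zero_or_pos n with rfl | hn0
      · rw [Nat.cast_zero, Real.zero_rpow (by rw [h2]; linarith), Real.zero_rpow (by linarith)]
        simp
      have hnp : (0 : ℝ) < n := by exact_mod_cast hn0
      have hn1 : (1 : ℝ) ≤ n := by exact_mod_cast hn0
      have hfn : 0 ≤ f n / (n : ℝ) ^ (1 + K / Real.log N) :=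
        div_nonneg (hf n) (Real.rpow_nonneg hnp.le _)
      split_ifs with hn
      · have : f n / (n : ℝ) ^ (1 + (2 * K) / Real.log N) ≤ f n / n := by
          apply div_le_div_of_nonneg_left (hf n) hnp
          conv_lhs => rw [← Real.rpow_one (n : ℝ)]
          exact Real.rpow_le_rpow_of_exponent_le hn1 (by rw [h2]; linarith)
        have := mul_nonneg (Real.exp_pos (-K)).le hfn
        linarith
      · have hle : Real.log N ≤ Real.log n := by
          apply Real.log_le_log (by positivity)
          simp at hn
          exact_mod_cast (by omega : N ≤ n)
        have h3 : Real.exp K ≤ (n : ℝ) ^ (K / Real.log N) := by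
          rw [Real.rpow_def_of_pos hnp, Real.exp_le_exp]
          calc K = Real.log N * (K / Real.log N) := by field_simp
            _ ≤ _ := by gcongr
        rw [h2, ← add_assoc, Real.rpow_add hnp _ (K / Real.log N), zero_add, ← div_div,
          Real.exp_neg, div_eq_inv_mul]
        gcongr
    have hx1 : 1 < 1 + 2 * K / Real.log N := by rw [h2]; linarith
    have hx2 : 1 < 1 + K / Real.log N := by linarith
    have hfin : HasSum (fun n : ℕ => if n ∈ Finset.range (N + 1) then f n / n else 0)
        (∑ n ∈ Finset.range (N + 1), f n / n) := by
      have := hasSum_sum_of_ne_finset_zero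
        (f := fun n : ℕ => if n ∈ Finset.range (N + 1) then f n / n else 0)
        (L := SummationFilter.unconditional ℕ) (s := Finset.range (N + 1)) (fun n hn => by simp only [hn, if_false])
      convert this using 1
      exact Finset.sum_congr rfl fun n hn => by simp only [hn, if_true]
    have := hasSum_le hpt (hs _ hx1).hasSum (hfin.add ((hs _ hx2).hasSum.mul_left (Real.exp (-K))))
    simp only [hTdef]
    linarith
  -- limits
  have hlim : ∀ u v : ℝ, Tendsto (fun N : ℕ => (u * Real.log (Real.log (N : ℝ)) + v) /
      Real.log (Real.log (N : ℝ))) atTop (nhds u) := by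
    intro u v
    have h1 : Tendsto (fun N : ℕ => u + v / Real.log (Real.log (N : ℝ))) atTop (nhds (u + 0)) :=
      tendsto_const_nhds.add (hLL.const_div_atTop v)
    rw [add_zero] at h1
    refine h1.congr' ?_
    filter_upwards [hLL.eventually_gt_atTop 0] with N hN
    field_simp
  rw [tendsto_order]
  constructor
  · intro b hb
    obtain ⟨K, hKb, hK⟩ : ∃ K : ℝ, b < c * (1 - Real.exp (-K)) ∧ 0 < K := by
      have : Tendsto (fun K : ℝ => c * (1 - Real.exp (-K))) atTop (nhds (c * (1 - 0))) :=
        (tendsto_const_nhds.sub Real.tendsto_exp_neg_atTop_nhds_zero).const_mul c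
      rw [sub_zero, mul_one] at this
      exact ((this.eventually (lt_mem_nhds hb)).and (eventually_gt_atTop 0)).exists
    have h := (hlim (c * (1 - Real.exp (-K)))
      (-c * Real.log (2 * K) - C - Real.exp (-K) * (-c * Real.log K + C))).eventually
        (lt_mem_nhds hKb)
    filter_upwards [h, hLL.eventually_gt_atTop 0, hL.eventually_ge_atTop (2 * K),
      eventually_gt_atTop 1] with N h1 h2 h3 h4
    refine h1.trans_le ?_
    gcongr
    refine le_trans ?_ (hlo K hK N h4)
    have e1 := abs_le.1 (hTK (2 * K) (by linarith) (Real.log N) h3 (by linarith))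
    have e2 := abs_le.1 (hTK K (by linarith) (Real.log N) (by linarith) (by linarith))
    have e3 := mul_le_mul_of_nonneg_left e2.2 (Real.exp_pos (-K)).le
    nlinarith [e1.1]
  · intro b hb
    obtain ⟨e, heb, he⟩ : ∃ e : ℝ, Real.exp e * c < b ∧ 0 < e := by
      have : Tendsto (fun e : ℝ => Real.exp e * c) (nhdsWithin 0 (Set.Ioi 0))
          (nhds (Real.exp 0 * c)) :=
        ((Real.continuous_exp.tendsto 0).mul_const c).mono_left nhdsWithin_le_nhds
      rw [Real.exp_zero, one_mul] at this
      exact ((this.eventually (gt_mem_nhds hb)).and self_mem_nhdsWithin).exists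
    have h := (hlim (Real.exp e * c) (Real.exp e * (-c * Real.log e + C))).eventually
        (gt_mem_nhds heb)
    filter_upwards [h, hLL.eventually_gt_atTop 0, hL.eventually_ge_atTop e,
      eventually_gt_atTop 1] with N h1 h2 h3 h4
    refine lt_of_le_of_lt ?_ h1
    gcongr
    refine le_trans (hup e he N h4 h3) ?_
    have e2 := abs_le.1 (hTK e he (Real.log N) h3 (by linarith))
    have e3 := mul_le_mul_of_nonneg_left e2.2 (Real.exp_pos e).le
    nlinarith [e3]

noncomputable def prInd (q : ℕ) (a : ZMod q) (n : ℕ) : ℝ :=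
  if n.Prime ∧ (n : ZMod q) = a then 1 else 0

theorem prInd_nonneg (q : ℕ) (a : ZMod q) (n : ℕ) : 0 ≤ prInd q a n := by
  unfold prInd; split_ifs <;> norm_num

theorem prInd_le (q : ℕ) (a : ZMod q) (n : ℕ) : prInd q a n ≤ 1 := by
  unfold prInd; split_ifs <;> norm_num

theorem prInd_summable (q : ℕ) (a : ZMod q) (x : ℝ) (hx : 1 < x) :
    Summable fun n : ℕ => prInd q a n / (n : ℝ) ^ x := by
  refine Summable.of_nonneg_of_le
    (fun n => div_nonneg (prInd_nonneg q a n) (Real.rpow_nonneg (Nat.cast_nonneg n) _))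
    (fun n => ?_) (Real.summable_one_div_nat_rpow.2 hx)
  have := prInd_le q a n
  gcongr

open ArithmeticFunction vonMangoldt in
theorem prInd_asymp (q : ℕ) [NeZero q] (a : ZMod q) (ha : IsUnit a) :
    ∃ C : ℝ, ∀ x : ℝ, 1 < x → x ≤ 2 →
      |(∑' n : ℕ, prInd q a n / (n : ℝ) ^ x) + (q.totient : ℝ)⁻¹ * Real.log (x - 1)| ≤ C := by
  set f : ℕ → ℂ := fun n => (prInd q a n : ℂ) with hfdef
  set g : ℕ → ℂ := fun n => ((if n.Prime then 0 else residueClass a n : ℝ) : ℂ) with hgdef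
  -- real series versus LSeries
  have hLS : ∀ x : ℝ, 1 < x → LSeries f x = ((∑' n : ℕ, prInd q a n / (n : ℝ) ^ x : ℝ) : ℂ) := by
    intro x hx
    rw [LSeries, Complex.ofReal_tsum]
    refine tsum_congr fun n => ?_
    rcases eq_or_ne n 0 with rfl | hn
    · simp [prInd, Nat.not_prime_zero]
    · rw [LSeries.term_of_ne_zero hn]
      push_cast [Complex.ofReal_cpow (Nat.cast_nonneg n)]
      rfl
  have habs : LSeries.abscissaOfAbsConv f ≤ 1 := by
    apply LSeries.abscissaOfAbsConv_le_of_le_const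
    refine ⟨1, fun n _ => ?_⟩
    simp only [hfdef, Complex.norm_real, Real.norm_eq_abs, abs_of_nonneg (prInd_nonneg q a n)]
    exact prInd_le q a n
  have habs' : ∀ x : ℝ, 1 < x → LSeries.abscissaOfAbsConv f < (x : ℂ).re := by
    intro x hx
    refine habs.trans_lt ?_
    rw [Complex.ofReal_re]; exact_mod_cast hx
  -- non-prime part
  have hg0 := summable_residueClass_non_primes_div a
  set D : ℝ := ∑' n : ℕ, (if n.Prime then 0 else residueClass a n) / (n : ℝ) with hD
  have hgterm : ∀ x : ℝ, 1 < x → ∀ n : ℕ, ‖LSeries.term g x n‖ ≤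
      (if n.Prime then 0 else residueClass a n) / (n : ℝ) := by
    intro x hx n
    rcases eq_or_ne n 0 with rfl | hn
    · simp
    have hn1 : (1 : ℝ) ≤ n := by exact_mod_cast Nat.one_le_iff_ne_zero.2 hn
    have h0 : (0 : ℝ) ≤ if n.Prime then 0 else residueClass a n := by
      split_ifs
      · exact le_rfl
      · exact residueClass_nonneg a n
    rw [LSeries.norm_term_eq, if_neg hn, Complex.ofReal_re]
    simp only [hgdef, Complex.norm_real, Real.norm_eq_abs, abs_of_nonneg h0]
    apply div_le_div_of_nonneg_left h0 (by linarith)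
    conv_lhs => rw [← Real.rpow_one (n : ℝ)]
    exact Real.rpow_le_rpow_of_exponent_le hn1 hx.le
  have hgs : ∀ x : ℝ, 1 < x → LSeriesSummable g x := fun x hx =>
    Summable.of_norm_bounded hg0 (hgterm x hx)
  have hgD : ∀ x : ℝ, 1 < x → ‖LSeries g x‖ ≤ D := fun x hx =>
    tsum_of_norm_bounded hg0.hasSum (hgterm x hx)
  have hdec : (fun n : ℕ => (residueClass a n : ℂ)) = LSeries.logMul f + g := by
    ext n
    simp only [Pi.add_apply, LSeries.logMul, hfdef, hgdef, prInd, residueClass,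
      Set.indicator_apply, Set.mem_ofPred_eq]
    by_cases hp : n.Prime
    · by_cases hc : (n : ZMod q) = a
      · simp [hp, hc, vonMangoldt_apply_prime hp]
      · simp [hp, hc]
    · simp [hp]
  -- the continuous part
  obtain ⟨B, hB⟩ : ∃ B : ℝ, ∀ x : ℝ, 1 ≤ x → x ≤ 2 → ‖LFunctionResidueClassAux a (x : ℂ)‖ ≤ B := by
    have hc : ContinuousOn (fun x : ℝ => LFunctionResidueClassAux a (x : ℂ)) (Set.Icc 1 2) :=
      (continuousOn_LFunctionResidueClassAux a).comp Complex.continuous_ofReal.continuousOn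
        (fun x hx => by simpa using hx.1)
    obtain ⟨B, hB⟩ := isCompact_Icc.exists_bound_of_continuousOn hc
    exact ⟨B, fun x h1 h2 => hB x ⟨h1, h2⟩⟩
  set G : ℝ → ℂ := fun x => LSeries f x + (((q.totient : ℝ)⁻¹ * Real.log (x - 1) : ℝ) : ℂ) with hG
  have hder : ∀ x ∈ Set.Ioc (1 : ℝ) 2, HasDerivWithinAt G
      (-LSeries (LSeries.logMul f) x + (((q.totient : ℝ)⁻¹ * (1 / (x - 1)) : ℝ) : ℂ))
      (Set.Ioc 1 2) x := by
    intro x hx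
    apply HasDerivAt.hasDerivWithinAt
    apply HasDerivAt.add
    · exact (LSeries_hasDerivAt (habs' x hx.1)).comp_ofReal
    · apply HasDerivAt.ofReal_comp
      apply HasDerivAt.const_mul
      exact ((hasDerivAt_id x).sub_const 1).log (by have := hx.1; simp; linarith)
  have hbd : ∀ x ∈ Set.Ioc (1 : ℝ) 2,
      ‖-LSeries (LSeries.logMul f) x + (((q.totient : ℝ)⁻¹ * (1 / (x - 1)) : ℝ) : ℂ)‖
        ≤ B + D := by
    intro x hx
    have h1 : LSeries (fun n : ℕ => (residueClass a n : ℂ)) x =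
        LSeries (LSeries.logMul f) x + LSeries g x := by
      rw [hdec]
      exact LSeries_add (LSeriesSummable_logMul_of_lt_re (habs' x hx.1)) (hgs x hx.1)
    have h2 := eqOn_LFunctionResidueClassAux ha (x := (x : ℂ)) (by simpa using hx.1)
    simp only at h2
    rw [h1] at h2
    have h3 : -LSeries (LSeries.logMul f) x + (((q.totient : ℝ)⁻¹ * (1 / (x - 1)) : ℝ) : ℂ)
        = LSeries g x - LFunctionResidueClassAux a (x : ℂ) := by
      rw [h2]; push_cast; ring
    rw [h3]
    have := norm_sub_le (LSeries g x) (LFunctionResidueClassAux a (x : ℂ))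
    linarith [hgD x hx.1, hB x hx.1.le hx.2]
  have h2m : (2 : ℝ) ∈ Set.Ioc (1 : ℝ) 2 := by constructor <;> norm_num
  refine ⟨(B + D) + ‖G 2‖, fun x h1 h2 => ?_⟩
  have key := (convex_Ioc (1 : ℝ) 2).norm_image_sub_le_of_norm_hasDerivWithin_le hder hbd h2m
    (show x ∈ Set.Ioc (1 : ℝ) 2 from ⟨h1, h2⟩)
  have hBD : 0 ≤ B + D := (norm_nonneg _).trans (hbd 2 h2m)
  have hx2 : ‖x - 2‖ ≤ 1 := by rw [Real.norm_eq_abs, abs_le]; constructor <;> linarith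
  have hGx : ‖G x‖ ≤ (B + D) + ‖G 2‖ := by
    have h5 : ‖G x‖ ≤ ‖G x - G 2‖ + ‖G 2‖ := by simpa using norm_add_le (G x - G 2) (G 2)
    have h6 : (B + D) * ‖x - 2‖ ≤ B + D := mul_le_of_le_one_right hBD hx2
    linarith
  simp only [hG, hLS x h1] at hGx
  rw [← Complex.ofReal_add, Complex.norm_real, Real.norm_eq_abs] at hGx
  exact hGx

theorem cos_sum (q : ℕ) (hq : 1 < q) :
    ∑ i ∈ Finset.range q, Real.cos (2 * Real.pi * i / q) = 0 := by
  have h := (Complex.isPrimitiveRoot_exp q (by omega)).geom_sum_eq_zero hq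
  have h2 := congrArg Complex.re h
  rw [Complex.re_sum, Complex.zero_re] at h2
  rw [← h2]
  refine Finset.sum_congr rfl fun i _ => ?_
  rw [← Complex.exp_nat_mul, ← Complex.exp_ofReal_mul_I_re]
  congr 2
  push_cast; ring

theorem cos_sum_zmod (q : ℕ) [NeZero q] (hq : 1 < q) :
    ∑ a : ZMod q, Real.cos (2 * Real.pi * a.val / q) = 0 := by
  rw [← cos_sum q hq]
  refine Finset.sum_bij (fun a _ => a.val) (fun a _ => by simpa using ZMod.val_lt a)
    (fun a _ b _ h => ZMod.val_injective q h)
    (fun i hi => ⟨(i : ZMod q), Finset.mem_univ _, ZMod.val_natCast_of_lt (by simpa using hi)⟩)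
    (fun a _ => rfl)

theorem cos_mod (q n : ℕ) (hq : 0 < q) :
    Real.cos (2 * Real.pi * n / q) = Real.cos (2 * Real.pi * ((n : ZMod q).val : ℕ) / q) := by
  rw [ZMod.val_natCast]
  have hq' : (q : ℝ) ≠ 0 := by positivity
  have h : (n : ℝ) = ((n % q : ℕ) : ℝ) + q * ((n / q : ℕ) : ℝ) := by
    exact_mod_cast (Nat.mod_add_div n q).symm
  rw [← Real.cos_add_nat_mul_two_pi (2 * Real.pi * ((n % q : ℕ) : ℝ) / q) (n / q)]
  congr 1
  rw [h]
  field_simp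

theorem V_decomp (q : ℕ) [NeZero q] (hq : 0 < q) (n : ℕ) :
    (∑ p ∈ (Finset.range (n + 1)).filter Nat.Prime,
          (1 : ℝ) / p * Real.cos (2 * Real.pi * p / q)) =
    ∑ a : ZMod q, Real.cos (2 * Real.pi * a.val / q) *
      ∑ m ∈ Finset.range (n + 1), prInd q a m / m := by
  simp_rw [Finset.mul_sum]
  rw [Finset.sum_comm, Finset.sum_filter]
  refine Finset.sum_congr rfl fun m _ => ?_
  rw [cos_mod q m hq]
  rw [Finset.sum_eq_single (m : ZMod q)]
  · by_cases hp : m.Prime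
    · simp [prInd, hp, mul_comm]
    · simp [prInd, hp]
  · intro b _ hb
    simp [prInd, Ne.symm hb]
  · simp

theorem zero_class (q : ℕ) (hq : q.Prime) :
    Tendsto (fun N : ℕ => (∑ n ∈ Finset.range (N + 1), prInd q 0 n / n) / Real.log (Real.log N))
      atTop (nhds 0) := by
  have hLL : Tendsto (fun N : ℕ => Real.log (Real.log (N : ℝ))) atTop atTop :=
    Real.tendsto_log_atTop.comp (Real.tendsto_log_atTop.comp tendsto_natCast_atTop_atTop)
  refine (hLL.const_div_atTop (1 / (q : ℝ))).congr' ?_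
  filter_upwards [eventually_ge_atTop q] with N hN
  congr 1
  rw [Finset.sum_eq_single q]
  · simp [prInd, hq]
  · intro b _ hb
    have : ¬ (b.Prime ∧ (b : ZMod q) = 0) := by
      rintro ⟨h1, h2⟩
      rw [ZMod.natCast_eq_zero_iff] at h2
      exact hb ((Nat.prime_dvd_prime_iff_eq hq h1).1 h2).symm
    simp [prInd, this]
  · intro h
    simp at h; omega

/-- For `q` prime, `V_{1,1}(n, 1/q) = ∑_{p ≤ n prime} (1/p) cos(2π p / q)` satisfies
`V_{1,1}(n, 1/q) / ln ln n → -1/(q-1)` as `n → ∞`. -/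
theorem prime_series_at_prime_reciprocal_asymptotic (q : ℕ) (hq : q.Prime) :
    Tendsto
      (fun n : ℕ =>
        (∑ p ∈ (Finset.range (n + 1)).filter Nat.Prime,
          (1 : ℝ) / p * Real.cos (2 * Real.pi * p / q)) / Real.log (Real.log n))
      atTop (nhds (-(1 / ((q : ℝ) - 1)))) := by
  have : Fact q.Prime := ⟨hq⟩
  have hlim : ∀ a : ZMod q, Tendsto (fun N : ℕ =>
      (∑ n ∈ Finset.range (N + 1), prInd q a n / n) / Real.log (Real.log N))
      atTop (nhds (if a = 0 then 0 else 1 / ((q : ℝ) - 1))) := by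
    intro a
    split_ifs with h
    · rw [h]; exact zero_class q hq
    · obtain ⟨C, hC⟩ := prInd_asymp q a (Ne.isUnit h)
      have := tauber (prInd q a) (prInd_nonneg q a) _ C (prInd_summable q a) hC
      rw [Nat.totient_prime hq, Nat.cast_sub hq.one_lt.le, Nat.cast_one] at this
      rwa [one_div]
  have hsum := tendsto_finsetSum (Finset.univ : Finset (ZMod q)) fun a _ =>
    (hlim a).const_mul (Real.cos (2 * Real.pi * a.val / q))
  have hval : ∑ a : ZMod q, Real.cos (2 * Real.pi * a.val / q) *
      (if a = 0 then 0 else 1 / ((q : ℝ) - 1)) = -(1 / ((q : ℝ) - 1)) := by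
    have h0 := cos_sum_zmod q hq.one_lt
    rw [← Finset.add_sum_erase _ _ (Finset.mem_univ (0 : ZMod q))] at h0 ⊢
    have h1 : ∑ a ∈ Finset.univ.erase (0 : ZMod q), Real.cos (2 * Real.pi * a.val / q) *
      (if a = 0 then 0 else 1 / ((q : ℝ) - 1)) =
      (∑ a ∈ Finset.univ.erase (0 : ZMod q), Real.cos (2 * Real.pi * a.val / q)) *
        (1 / ((q : ℝ) - 1)) := by
      rw [Finset.sum_mul]
      refine Finset.sum_congr rfl fun a ha => ?_
      rw [if_neg (Finset.ne_of_mem_erase ha)]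
    rw [h1]
    simp only [ZMod.val_zero, Nat.cast_zero, mul_zero, zero_div, Real.cos_zero, if_true] at h0 ⊢
    rw [show (∑ a ∈ Finset.univ.erase (0 : ZMod q), Real.cos (2 * Real.pi * a.val / q)) = -1 by
      linarith]
    ring
  rw [hval] at hsum
  refine hsum.congr fun n => ?_
  rw [V_decomp q hq.pos n, Finset.sum_div]
  refine Finset.sum_congr rfl fun a _ => ?_
  exact (mul_div_assoc _ _ _).symm
end

section
/- Let α be a real number with α > 1 and let N ≥ 2. Then the tail of the prime zeta function satisfies ∑_{p > N, p prime} p^{−α} = ∑_{n=1}^∞ (μ(n)/n) · ln( ζ(nα) · ∏_{p ≤ N, p prime} (1 − p^{−nα}) ), where μ is the Möbius function and ζ(s) = ∑_{k=1}^∞ k^{−s} is the Riemann zeta function; in particular the series over n on the right-hand side converges. -/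
/-- The Riemann zeta function for real argument `s`, as `∑_{k=1}^∞ k^{-s}`. -/
noncomputable def realZeta (s : ℝ) : ℝ := ∑' k : ℕ+, ((k : ℕ) : ℝ) ^ (-s)

open Filter Topology in
lemma pz_hasSum_log (s : ℝ) (hs : 1 < s) :
    0 < realZeta s ∧
    HasSum (fun p : Nat.Primes => -Real.log (1 - ((p : ℕ) : ℝ) ^ (-s))) (Real.log (realZeta s)) := by
  let f : ℕ →*₀ ℝ :=
    { toFun := fun n => (n : ℝ) ^ (-s)
      map_zero' := by
        simp only [Nat.cast_zero]
        exact Real.zero_rpow (by linarith)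
      map_one' := by simp
      map_mul' := fun m n => by
        push_cast
        exact Real.mul_rpow (by positivity) (by positivity) }
  have hf : ∀ n, f n = (n : ℝ) ^ (-s) := fun n => rfl
  have hsum0 : Summable (fun n : ℕ => (n : ℝ) ^ (-s)) := Real.summable_nat_rpow.2 (by linarith)
  have hsum : Summable (‖f ·‖) := by
    simpa only [hf] using hsum0.norm
  have hz : realZeta s = ∑' n, f n := by
    unfold realZeta
    rw [← tsum_zero_pnat_eq_tsum_nat (f := fun n => f n) hsum.of_norm]
    rw [map_zero f, zero_add]
    simp only [hf]
  have hprod := EulerProduct.eulerProduct_completely_multiplicative_hasProd hsum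
  rw [← hz] at hprod
  have hpos : 0 < realZeta s := by
    have h1 : (1 : ℝ) ≤ ∑' n, f n := by
      have := hsum.of_norm.le_tsum 1 (fun j _ => by rw [hf]; positivity)
      simpa using this
    linarith
  refine ⟨hpos, ?_⟩
  have hlt : ∀ p : Nat.Primes, 0 < 1 - ((p : ℕ) : ℝ) ^ (-s) := fun p => by
    have : ((p : ℕ) : ℝ) ^ (-s) < 1 :=
      Real.rpow_lt_one_of_one_lt_of_neg (by exact_mod_cast p.2.one_lt) (by linarith)
    linarith
  have hT := (Real.continuousAt_log hpos.ne').tendsto.comp hprod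
  refine hT.congr fun t => ?_
  simp only [Function.comp]
  rw [Real.log_prod (fun p _ => by rw [hf]; exact (inv_pos.2 (hlt p)).ne')]
  simp [hf, Real.log_inv]

lemma pz_hasSum_tail (s : ℝ) (hs : 1 < s) (N : ℕ) :
    HasSum (fun p : {p : Nat.Primes // N < (p : ℕ)} => -Real.log (1 - ((p : ℕ) : ℝ) ^ (-s)))
      (Real.log (realZeta s *
            ∏ p ∈ (Finset.range (N + 1)).filter Nat.Prime, (1 - (p : ℝ) ^ (-s)))) := by
  obtain ⟨hpos, h⟩ := pz_hasSum_log s hs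
  have hlt : ∀ p : ℕ, p.Prime → 0 < 1 - (p : ℝ) ^ (-s) := fun p hp => by
    have : (p : ℝ) ^ (-s) < 1 :=
      Real.rpow_lt_one_of_one_lt_of_neg (by exact_mod_cast hp.one_lt) (by linarith)
    linarith
  let S : Finset Nat.Primes := (Finset.range (N + 1)).subtype Nat.Prime
  have hS : ∀ p : Nat.Primes, N < (p : ℕ) ↔ p ∉ S := fun p => by
    have hm : p ∈ S ↔ (p : ℕ) ∈ Finset.range (N + 1) := Finset.mem_subtype
    rw [hm, Finset.mem_range]
    omega
  rw [Real.log_mul hpos.ne' (Finset.prod_pos fun p hp => hlt p (Finset.mem_filter.1 hp).2).ne',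
    Real.log_prod (fun p hp => (hlt p (Finset.mem_filter.1 hp).2).ne')]
  rw [← Finset.sum_subtype_eq_sum_filter (f := fun p : ℕ => Real.log (1 - (p : ℝ) ^ (-s)))]
  have h2 := (S.hasSum_compl_iff (f := fun p : Nat.Primes =>
    -Real.log (1 - ((p : ℕ) : ℝ) ^ (-s))) (a := Real.log (realZeta s) +
      ∑ p ∈ S, Real.log (1 - ((p : ℕ) : ℝ) ^ (-s)))).2 (by
      rw [Finset.sum_neg_distrib, add_neg_cancel_right]; exact h)
  exact (Equiv.subtypeEquivRight hS).hasSum_iff.2 h2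

lemma pz_moebius_sum (n : ℕ) :
    ∑ d ∈ n.divisors, (ArithmeticFunction.moebius d : ℝ) = if n = 1 then 1 else 0 := by
  have h := ArithmeticFunction.coe_mul_zeta_apply (f := ArithmeticFunction.moebius) (x := n)
  rw [ArithmeticFunction.moebius_mul_coe_zeta, ArithmeticFunction.one_apply] at h
  have h2 := congrArg (Int.cast : ℤ → ℝ) h
  push_cast at h2
  exact h2.symm

lemma pz_moebius_abs (n : ℕ) : |(ArithmeticFunction.moebius n : ℝ)| ≤ 1 := by
  have := ArithmeticFunction.abs_moebius_le_one (n := n)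
  exact_mod_cast this

lemma pz_inv (x : ℝ) (h0 : 0 ≤ x) (h1 : x < 1) :
    ∑' n : ℕ+, ((ArithmeticFunction.moebius (n : ℕ) : ℝ) / (n : ℕ)) *
      (-Real.log (1 - x ^ (n : ℕ))) = x := by
  let F : ℕ+ × ℕ+ → ℝ := fun c =>
    ((ArithmeticFunction.moebius (c.1 : ℕ) : ℝ) / (c.1 : ℕ)) * ((x ^ (c.1 : ℕ)) ^ (c.2 : ℕ) / (c.2 : ℕ))
  have hF : Summable F := by
    have h := summable_prod_mul_pow (𝕜 := ℝ) 0 (r := x) (by rwa [Real.norm_of_nonneg h0])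
    refine Summable.of_norm_bounded h fun c => ?_
    have ha : (1 : ℝ) ≤ (c.1 : ℕ) := by exact_mod_cast c.1.2
    have hb : (1 : ℝ) ≤ (c.2 : ℕ) := by exact_mod_cast c.2.2
    simp only [F, norm_mul, norm_div, Real.norm_eq_abs, pow_zero, one_mul, ← pow_mul,
      Nat.abs_cast]
    rw [abs_of_nonneg (pow_nonneg h0 _)]
    have hm := pz_moebius_abs (c.1 : ℕ)
    have e1 : |(ArithmeticFunction.moebius (c.1 : ℕ) : ℝ)| / (c.1 : ℕ) ≤ 1 :=
      div_le_one_of_le₀ (hm.trans ha) (by positivity)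
    have e2 : x ^ ((c.1 : ℕ) * (c.2 : ℕ)) / ((c.2 : ℕ) : ℝ) ≤ x ^ ((c.1 : ℕ) * (c.2 : ℕ)) :=
      div_le_self (pow_nonneg h0 _) hb
    calc _ ≤ 1 * x ^ ((c.1 : ℕ) * (c.2 : ℕ)) :=
          mul_le_mul e1 e2 (by positivity) zero_le_one
      _ = _ := one_mul _
  have hL : ∀ n : ℕ+, ((ArithmeticFunction.moebius (n : ℕ) : ℝ) / (n : ℕ)) *
      (-Real.log (1 - x ^ (n : ℕ))) = ∑' m : ℕ+, F (n, m) := fun n => by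
    have hx : |x ^ (n : ℕ)| < 1 := by
      rw [abs_of_nonneg (pow_nonneg h0 _)]
      exact pow_lt_one₀ h0 h1 n.ne_zero
    have h := Real.hasSum_pow_div_log_of_abs_lt_one hx
    have h' : HasSum (fun m : ℕ+ => (x ^ (n : ℕ)) ^ (m : ℕ) / ((m : ℕ) : ℝ))
        (-Real.log (1 - x ^ (n : ℕ))) := by
      rw [hasSum_pnat_iff_hasSum_succ (f := fun m : ℕ => (x ^ (n : ℕ)) ^ m / (m : ℝ))]
      simpa using h
    exact (h'.mul_left _).tsum_eq.symm
  rw [tsum_congr hL, ← hF.tsum_prod, ← sigmaAntidiagonalEquivProd.tsum_eq,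
    Summable.tsum_sigma (f := fun c => F (sigmaAntidiagonalEquivProd c))
      (sigmaAntidiagonalEquivProd.summable_iff.2 hF)]
  have hk : ∀ k : ℕ+, ∑' c : Nat.divisorsAntidiagonal (k : ℕ), F (sigmaAntidiagonalEquivProd ⟨k, c⟩)
      = if k = 1 then x else 0 := fun k => by
    rw [tsum_fintype]
    have e : ∀ c : Nat.divisorsAntidiagonal (k : ℕ), F (sigmaAntidiagonalEquivProd ⟨k, c⟩) =
        (fun c : ℕ × ℕ => (ArithmeticFunction.moebius c.1 : ℝ) * (x ^ (k : ℕ) / (k : ℕ))) c := by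
      rintro ⟨⟨a, b⟩, hab⟩
      have hab' := (Nat.mem_divisorsAntidiagonal.1 hab).1
      simp only [F, sigmaAntidiagonalEquivProd, divisorsAntidiagonalFactors, Equiv.coe_fn_mk,
        PNat.mk_coe]
      rw [← pow_mul]
      simp only at hab'
      rw [hab', ← hab', Nat.cast_mul, div_mul_div_comm, mul_div_assoc]
    rw [Finset.sum_congr rfl (fun c _ => e c), Finset.univ_eq_attach, Finset.sum_attach
      (Nat.divisorsAntidiagonal (k : ℕ))
      (fun c : ℕ × ℕ => (ArithmeticFunction.moebius c.1 : ℝ) * (x ^ (k : ℕ) / (k : ℕ))),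
      Nat.sum_divisorsAntidiagonal
        (fun a _ => (ArithmeticFunction.moebius a : ℝ) * (x ^ (k : ℕ) / (k : ℕ))),
      ← Finset.sum_mul, pz_moebius_sum]
    by_cases h : k = 1
    · subst h; simp
    · simp [h]
  rw [tsum_congr hk, tsum_ite_eq]

lemma pz_bound (y : ℝ) (h0 : 0 ≤ y) (h1 : y ≤ 1 / 2) : |-Real.log (1 - y)| ≤ 2 * y := by
  have h := Real.one_sub_inv_le_log_of_pos (x := 1 - y) (by linarith)
  have h2 : Real.log (1 - y) ≤ 0 := Real.log_nonpos (by linarith) (by linarith)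
  rw [abs_neg, abs_of_nonpos h2]
  have h3 : (1 - y)⁻¹ ≤ 1 + 2 * y := by
    rw [inv_le_iff_one_le_mul₀ (by linarith)]
    nlinarith
  linarith

/-- For real `α > 1` and `N ≥ 2`, the tail of the prime zeta function satisfies
`∑_{p > N} p^{-α} = ∑_{n=1}^∞ (μ(n)/n) ln(ζ(nα) ∏_{p ≤ N} (1 - p^{-nα}))`,
the series over `n` being convergent. -/
theorem prime_zeta_tail_formula (α : ℝ) (hα : 1 < α) (N : ℕ) (hN : 2 ≤ N) :
    Summable (fun n : ℕ+ =>
        ((ArithmeticFunction.moebius (n : ℕ) : ℝ) / (n : ℕ)) *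
          Real.log (realZeta ((n : ℕ) * α) *
            ∏ p ∈ (Finset.range (N + 1)).filter Nat.Prime, (1 - (p : ℝ) ^ (-((n : ℕ) * α)))))
      ∧
      (∑' p : {p : Nat.Primes // N < (p : ℕ)}, ((p : ℕ) : ℝ) ^ (-α)) =
        ∑' n : ℕ+,
          ((ArithmeticFunction.moebius (n : ℕ) : ℝ) / (n : ℕ)) *
            Real.log (realZeta ((n : ℕ) * α) *
              ∏ p ∈ (Finset.range (N + 1)).filter Nat.Prime,
                (1 - (p : ℝ) ^ (-((n : ℕ) * α)))) := by
  let x : {p : Nat.Primes // N < (p : ℕ)} → ℝ := fun p => ((p : ℕ) : ℝ) ^ (-α)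
  have hxpow : ∀ p n, ((p : {p : Nat.Primes // N < (p : ℕ)}) : ℝ) ^ (-((n : ℕ) * α)) = x p ^ n := by
    intro p n
    simp only [x]
    rw [← Real.rpow_natCast, ← Real.rpow_mul (by positivity)]
    congr 1; ring
  have hx0 : ∀ p, 0 ≤ x p := fun p => by simp only [x]; positivity
  have hx1 : ∀ p, x p ≤ 1 / 2 := fun p => by
    have hp : (2 : ℝ) ≤ ((p : ℕ) : ℝ) := by exact_mod_cast p.1.2.two_le
    calc x p ≤ ((p : ℕ) : ℝ) ^ (-1 : ℝ) :=
          Real.rpow_le_rpow_of_exponent_le (by linarith) (by linarith)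
      _ = ((p : ℕ) : ℝ)⁻¹ := Real.rpow_neg_one _
      _ ≤ (2 : ℝ)⁻¹ := inv_anti₀ (by norm_num) hp
      _ = 1 / 2 := by norm_num
  have hxs : Summable x :=
    (Nat.Primes.summable_rpow.2 (by linarith : -α < -1)).comp_injective Subtype.val_injective
  let G : ℕ+ × {p : Nat.Primes // N < (p : ℕ)} → ℝ := fun c =>
    ((ArithmeticFunction.moebius (c.1 : ℕ) : ℝ) / (c.1 : ℕ)) *
      (-Real.log (1 - x c.2 ^ (c.1 : ℕ)))
  have hgeo : Summable (fun n : ℕ+ => 4 * (1 / 2 : ℝ) ^ (n : ℕ)) :=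
    (summable_geometric_two.mul_left 4).comp_injective PNat.coe_injective
  have hG : Summable G := by
    refine Summable.of_norm_bounded (hgeo.mul_of_nonneg hxs (fun n => by positivity) hx0) ?_
    rintro ⟨n, p⟩
    have ha : (1 : ℝ) ≤ (n : ℕ) := by exact_mod_cast n.2
    have e1 : |(ArithmeticFunction.moebius (n : ℕ) : ℝ)| / (n : ℕ) ≤ 1 :=
      div_le_one_of_le₀ ((pz_moebius_abs _).trans ha) (by positivity)
    have hpw : x p ^ (n : ℕ) ≤ 2 * (1 / 2 : ℝ) ^ (n : ℕ) * x p := by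
      obtain ⟨k, hk⟩ := Nat.exists_eq_succ_of_ne_zero n.ne_zero
      rw [hk, Nat.succ_eq_add_one, pow_succ, pow_succ]
      have := mul_le_mul_of_nonneg_right (pow_le_pow_left₀ (hx0 p) (hx1 p) k) (hx0 p)
      linarith
    have e2 := pz_bound (x p ^ (n : ℕ)) (pow_nonneg (hx0 p) _)
      ((pow_le_of_le_one (hx0 p) ((hx1 p).trans (by norm_num)) n.ne_zero).trans (hx1 p))
    simp only [G, norm_mul, norm_div, Real.norm_eq_abs, Nat.abs_cast]
    calc _ ≤ 1 * (2 * x p ^ (n : ℕ)) := mul_le_mul e1 e2 (abs_nonneg _) zero_le_one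
      _ ≤ _ := by linarith
  have hn : ∀ n : ℕ+, ((ArithmeticFunction.moebius (n : ℕ) : ℝ) / (n : ℕ)) *
          Real.log (realZeta ((n : ℕ) * α) *
            ∏ p ∈ (Finset.range (N + 1)).filter Nat.Prime, (1 - (p : ℝ) ^ (-((n : ℕ) * α)))) =
      ∑' p, G (n, p) := fun n => by
    have ha : (1 : ℝ) ≤ (n : ℕ) := by exact_mod_cast n.2
    have h := pz_hasSum_tail ((n : ℕ) * α) (by nlinarith) N
    simp only [hxpow] at h
    exact (h.mul_left _).tsum_eq.symm
  simp only [hn]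
  refine ⟨hG.prod, ?_⟩
  refine Eq.trans ?_ (Summable.tsum_comm (f := fun n p => G (n, p)) hG)
  exact tsum_congr fun p => (pz_inv (x p) (hx0 p) ((hx1 p).trans_lt (by norm_num))).symm
end

section
/- Let a, b be real numbers with 0 < a < 1 and a·b > 1. Then the Weierstrass function F_{a,b}(t) = ∑_{n=0}^∞ aⁿ·cos(bⁿ·t) is nowhere differentiable, and it is uniformly Hölder continuous with exponent s = −ln(a)/ln(b): there exists C > 0 such that |F_{a,b}(t) − F_{a,b}(t₀)| ≤ C·|t − t₀|^s for all t, t₀ ∈ ℝ. -/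
open MeasureTheory FourierTransform in
theorem kernel_exists (b : ℝ) (hb : 1 < b) : ∃ χ : ℝ → ℂ, Continuous χ ∧ Integrable χ ∧
    Integrable (fun y : ℝ => (y : ℂ) * χ y) ∧ (∫ y : ℝ, (y : ℂ) * χ y = 0) ∧
    (∀ l : ℝ, (l ≤ b⁻¹ ∨ b ≤ l) → ∫ y : ℝ, Complex.exp (-(l * y : ℝ) * Complex.I) * χ y = 0) ∧
    (∫ y : ℝ, Complex.exp (-(y : ℝ) * Complex.I) * χ y = 1) := by
  have hb0 : 0 < b := by linarith
  have hbi : b⁻¹ < 1 := inv_lt_one_of_one_lt₀ hb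
  have hbi0 : 0 < b⁻¹ := inv_pos.2 hb0
  have hsum : 2 < b + b⁻¹ := by
    have h1 : b * b⁻¹ = 1 := mul_inv_cancel₀ hb0.ne'
    nlinarith
  have hpi := Real.pi_pos
  let r : ℝ := (1 - b⁻¹) / (2 * Real.pi)
  have hr : 0 < r := div_pos (by linarith) (by positivity)
  let B : ContDiffBump (1 / (2 * Real.pi) : ℝ) := ⟨r / 2, r, by positivity, by linarith⟩
  have hcs : HasCompactSupport (fun x : ℝ => ((B x : ℝ) : ℂ)) :=
    B.hasCompactSupport.comp_left (g := fun x : ℝ => (x : ℂ)) (by simp)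
  have hcd : ContDiff ℝ ((⊤ : ℕ∞) : WithTop ℕ∞) (fun x : ℝ => ((B x : ℝ) : ℂ)) :=
    Complex.ofRealCLM.contDiff.comp B.contDiff
  let φ : SchwartzMap ℝ ℂ := hcs.toSchwartzMap hcd
  have hφ : ∀ x, φ x = ((B x : ℝ) : ℂ) := fun x => rfl
  let χ : SchwartzMap ℝ ℂ := 𝓕⁻ φ
  have hF : 𝓕 (χ : ℝ → ℂ) = φ := by
    rw [← SchwartzMap.fourier_coe]
    simp [χ]
  have hint2 : Integrable (fun y : ℝ => y • χ y) := by
    have := χ.integrable_pow_mul volume 1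
    refine this.mono' (by fun_prop) (Filter.Eventually.of_forall fun y => ?_)
    simp
  have hint2' : Integrable (fun y : ℝ => (y : ℂ) * χ y) := by simpa using hint2
  have hzero : ∀ l : ℝ, (l ≤ b⁻¹ ∨ b ≤ l) → B (l / (2 * Real.pi)) = 0 := by
    intro l hl
    apply B.zero_of_le_dist
    change r ≤ _
    rw [Real.dist_eq, ← sub_div, abs_div, abs_of_pos (by positivity : 0 < 2 * Real.pi)]
    apply div_le_div_of_nonneg_right _ (by positivity)
    rcases hl with hl | hl
    · rw [abs_of_nonpos (by linarith)]; linarith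
    · rw [abs_of_nonneg (by linarith)]; linarith
  have hval : ∀ l : ℝ, ∫ y : ℝ, Complex.exp (-(l * y : ℝ) * Complex.I) * χ y
      = ((B (l / (2 * Real.pi)) : ℝ) : ℂ) := by
    intro l
    rw [← hφ, ← hF, Real.fourier_real_eq_integral_exp_smul]
    congr 1
    ext y
    rw [smul_eq_mul]
    congr 2
    push_cast
    have : (Real.pi : ℂ) ≠ 0 := by exact_mod_cast hpi.ne'
    field_simp
  refine ⟨χ, χ.continuous, χ.integrable, hint2', ?_, ?_, ?_⟩
  · have h := congrFun (Real.deriv_fourier χ.integrable hint2) 0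
    rw [hF] at h
    have hd : deriv φ 0 = 0 := by
      have : (φ : ℝ → ℂ) =ᶠ[nhds 0] fun _ => 0 := by
        filter_upwards [Iio_mem_nhds (show (0:ℝ) < b⁻¹ / (2 * Real.pi) by positivity)] with x hx
        rw [hφ]
        have := hzero (x * (2 * Real.pi)) (Or.inl (by
          rw [Set.mem_Iio, lt_div_iff₀ (by positivity)] at hx; exact hx.le))
        rw [mul_div_cancel_right₀ _ (by positivity)] at this
        simp [this]
      rw [this.deriv_eq]; simp
    rw [hd, Real.fourier_real_eq_integral_exp_smul] at h
    have h' : (0 : ℂ) = ∫ y : ℝ, (-2 * Real.pi * Complex.I) * ((y : ℂ) * χ y) := by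
      simpa [mul_assoc] using h
    rw [integral_const_mul] at h'
    have hne : (-2 * Real.pi * Complex.I : ℂ) ≠ 0 := by simp [hpi.ne']
    exact (mul_eq_zero.1 h'.symm).resolve_left hne
  · intro l hl
    rw [hval, hzero l hl]; simp
  · have := hval 1
    rw [B.one_of_mem_closedBall (Metric.mem_closedBall_self B.rIn_pos.le)] at this
    simpa using this

theorem w_summable (a b t : ℝ) (ha0 : 0 < a) (ha1 : a < 1) :
    Summable (fun n : ℕ => a ^ n * Real.cos (b ^ n * t)) := by
  refine Summable.of_norm_bounded (summable_geometric_of_lt_one ha0.le ha1) fun n => ?_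
  rw [norm_mul, Real.norm_eq_abs, Real.norm_eq_abs, abs_of_pos (pow_pos ha0 n)]
  exact mul_le_of_le_one_right (pow_pos ha0 n).le (Real.abs_cos_le_one _)

theorem w_holder (a b : ℝ) (ha0 : 0 < a) (ha1 : a < 1) (hab : 1 < a * b) :
    ∃ C > (0 : ℝ), ∀ t t₀ : ℝ,
          |(∑' n : ℕ, a ^ n * Real.cos (b ^ n * t)) -
              (∑' n : ℕ, a ^ n * Real.cos (b ^ n * t₀))| ≤
            C * |t - t₀| ^ (-Real.log a / Real.log b) := by
  have hb : 1 < b := by nlinarith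
  have hb0 : 0 < b := by linarith
  have hlb : 0 < Real.log b := Real.log_pos hb
  have hla : Real.log a < 0 := Real.log_neg ha0 ha1
  set s := -Real.log a / Real.log b with hs
  have hs0 : 0 < s := div_pos (by linarith) hlb
  have habp : 0 < a * b - 1 := by linarith
  have h1a : 0 < 1 - a := by linarith
  have hbs : b ^ s = a⁻¹ := by
    rw [Real.rpow_def_of_pos hb0, hs, mul_div_cancel₀ _ hlb.ne', ← Real.log_inv,
      Real.exp_log (inv_pos.2 ha0)]
  refine ⟨b / (a * b - 1) + 2 / (1 - a), by positivity, fun t t₀ => ?_⟩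
  set h := |t - t₀| with hh
  have hh0 : 0 ≤ h := abs_nonneg _
  have hS : Summable (fun n : ℕ => a ^ n * Real.cos (b ^ n * t) - a ^ n * Real.cos (b ^ n * t₀)) :=
    (w_summable a b t ha0 ha1).sub (w_summable a b t₀ ha0 ha1)
  rw [← (w_summable a b t ha0 ha1).tsum_sub (w_summable a b t₀ ha0 ha1)]
  set f : ℕ → ℝ := fun n => a ^ n * Real.cos (b ^ n * t) - a ^ n * Real.cos (b ^ n * t₀) with hf
  have hf2 : ∀ n, |f n| ≤ 2 * a ^ n := by
    intro n
    have h1 := Real.abs_cos_le_one (b ^ n * t)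
    have h2 := Real.abs_cos_le_one (b ^ n * t₀)
    have h3 := abs_sub (Real.cos (b ^ n * t)) (Real.cos (b ^ n * t₀))
    simp only [hf]
    rw [← mul_sub, abs_mul, abs_of_pos (pow_pos ha0 n), mul_comm]
    exact mul_le_mul_of_nonneg_right (by linarith) (pow_pos ha0 n).le
  have hf1 : ∀ n, |f n| ≤ (a * b) ^ n * h := by
    intro n
    simp only [hf]
    rw [← mul_sub, abs_mul, abs_of_pos (pow_pos ha0 n), mul_pow, mul_assoc]
    refine mul_le_mul_of_nonneg_left ?_ (pow_pos ha0 n).le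
    refine (Real.abs_cos_sub_cos_le _ _).trans ?_
    rw [← mul_sub, abs_mul, abs_of_pos (pow_pos hb0 n)]
  have htail : ∀ M : ℕ, |∑' n, f (n + M)| ≤ 2 / (1 - a) * a ^ M := by
    intro M
    have hg : HasSum (fun n : ℕ => (2 * a ^ M) * a ^ n) ((2 * a ^ M) * (1 - a)⁻¹) :=
      (hasSum_geometric_of_lt_one ha0.le ha1).mul_left _
    have := tsum_of_norm_bounded hg (f := fun n => f (n + M)) (fun n => by
      refine (hf2 _).trans (le_of_eq ?_)
      rw [pow_add]; ring)
    rw [Real.norm_eq_abs] at this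
    refine this.trans (le_of_eq ?_)
    rw [div_eq_mul_inv]; ring
  have hC1 : 0 ≤ b / (a * b - 1) := by positivity
  have hC2 : 0 ≤ 2 / (1 - a) := by positivity
  rcases le_or_gt 1 h with h1 | h1
  · have := htail 0
    simp only [add_zero, pow_zero, mul_one] at this
    have h2 : 1 ≤ h ^ s := Real.one_le_rpow h1 hs0.le
    nlinarith
  rcases hh0.eq_or_lt with h0 | h0
  · have hz : ∀ n, f n = 0 := fun n => by
      have := hf1 n
      rw [← h0, mul_zero] at this
      exact abs_nonpos_iff.1 this
    have hz' : ∑' n, f n = 0 := by rw [tsum_congr hz, tsum_zero]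
    change |∑' n, f n| ≤ _
    rw [hz', abs_zero]
    positivity
  obtain ⟨N, hN1, hN2⟩ := exists_nat_pow_near (one_le_inv_iff₀.2 ⟨h0, h1.le⟩) hb
  have hbh : b ^ N * h ≤ 1 := by
    rw [← le_div_iff₀ h0, one_div]; exact hN1
  have hbh2 : 1 ≤ b ^ (N + 1) * h := by
    rw [← div_le_iff₀ h0, one_div]; exact hN2.le
  have hpow : a ^ (N + 1) ≤ h ^ s := by
    have := Real.one_le_rpow hbh2 hs0.le
    rw [Real.mul_rpow (by positivity) hh0, ← Real.rpow_natCast, ← Real.rpow_mul hb0.le,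
      mul_comm (_ : ℝ) s, Real.rpow_mul hb0.le, hbs, Real.rpow_natCast, inv_pow] at this
    rwa [inv_mul_eq_div, one_le_div (by positivity)] at this
  have hhead : |∑ n ∈ Finset.range (N + 1), f n| ≤ b / (a * b - 1) * a ^ (N + 1) := by
    calc |∑ n ∈ Finset.range (N + 1), f n| ≤ ∑ n ∈ Finset.range (N + 1), |f n| :=
          Finset.abs_sum_le_sum_abs _ _
      _ ≤ ∑ n ∈ Finset.range (N + 1), (a * b) ^ n * h := Finset.sum_le_sum fun n _ => hf1 n
      _ = ((a * b) ^ (N + 1) - 1) / (a * b - 1) * h := by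
          rw [← Finset.sum_mul, geom_sum_eq (by linarith)]
      _ ≤ ((a * b) ^ (N + 1)) / (a * b - 1) * h := by gcongr; linarith
      _ = b / (a * b - 1) * a ^ (N + 1) * (b ^ N * h) := by rw [mul_pow, pow_succ b]; ring
      _ ≤ _ := mul_le_of_le_one_right (by positivity) hbh
  rw [← hS.sum_add_tsum_nat_add (N + 1)]
  calc _ ≤ _ := abs_add_le _ _
    _ ≤ b / (a * b - 1) * a ^ (N + 1) + 2 / (1 - a) * a ^ (N + 1) := add_le_add hhead (htail _)
    _ ≤ _ := by rw [← add_mul]; gcongr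

open MeasureTheory in
theorem w_cos_integral (χ : ℝ → ℂ) (hi : Integrable χ) (c l : ℝ) :
    ∫ y : ℝ, ((Real.cos (c + l * y) : ℝ) : ℂ) * χ y =
      Complex.exp (c * Complex.I) / 2 *
        (∫ y : ℝ, Complex.exp (-(-l * y : ℝ) * Complex.I) * χ y) +
      Complex.exp (-c * Complex.I) / 2 *
        (∫ y : ℝ, Complex.exp (-(l * y : ℝ) * Complex.I) * χ y) := by
  have key : ∀ l : ℝ, Integrable (fun y : ℝ => Complex.exp (-(l * y : ℝ) * Complex.I) * χ y) := by
    intro l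
    refine hi.bdd_mul (c := 1) (by fun_prop) (Filter.Eventually.of_forall fun y => ?_)
    rw [← Complex.ofReal_neg, Complex.norm_exp_ofReal_mul_I]
  rw [← integral_const_mul, ← integral_const_mul,
    ← integral_add ((key (-l)).const_mul _) ((key l).const_mul _)]
  congr 1
  ext y
  rw [Complex.ofReal_cos, Complex.cos]
  have e1 : Complex.exp (((c + l * y : ℝ) : ℂ) * Complex.I) =
      Complex.exp (c * Complex.I) * Complex.exp (-(-l * y : ℝ) * Complex.I) := by
    rw [← Complex.exp_add]; congr 1; push_cast; ring
  have e2 : Complex.exp (-((c + l * y : ℝ) : ℂ) * Complex.I) =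
      Complex.exp (-c * Complex.I) * Complex.exp (-(l * y : ℝ) * Complex.I) := by
    rw [← Complex.exp_add]; congr 1; push_cast; ring
  rw [e1, e2]; ring

open MeasureTheory Filter Topology in
theorem w_nowhere (a b : ℝ) (ha0 : 0 < a) (ha1 : a < 1) (hab : 1 < a * b) (t₀ : ℝ) :
    ¬ DifferentiableAt ℝ (fun t : ℝ => ∑' n : ℕ, a ^ n * Real.cos (b ^ n * t)) t₀ := by
  intro hdiff
  have hb : 1 < b := by nlinarith
  have hb0 : 0 < b := by linarith
  have h1a : 0 < 1 - a := by linarith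
  obtain ⟨χ, hχc, hχ, hyχ, hyχ0, hΦ0, hΦ1⟩ := kernel_exists b hb
  set F : ℝ → ℝ := fun t : ℝ => ∑' n : ℕ, a ^ n * Real.cos (b ^ n * t) with hF
  have hterm : ∀ (n : ℕ) (t : ℝ), ‖a ^ n * Real.cos (b ^ n * t)‖ ≤ a ^ n := by
    intro n t
    rw [norm_mul, Real.norm_eq_abs, Real.norm_eq_abs, abs_of_pos (pow_pos ha0 n)]
    exact mul_le_of_le_one_right (pow_pos ha0 n).le (Real.abs_cos_le_one _)
  have hgeo := summable_geometric_of_lt_one ha0.le ha1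
  have hFc : Continuous F := continuous_tsum (fun n => by fun_prop) hgeo hterm
  have hFb : ∀ t, |F t| ≤ (1 - a)⁻¹ := fun t =>
    tsum_of_norm_bounded (hasSum_geometric_of_lt_one ha0.le ha1) (fun n => hterm n t)
  set M := (1 - a)⁻¹ with hM
  have hM0 : 0 < M := inv_pos.2 h1a
  have hder := hdiff.hasDerivAt
  set d := deriv F t₀ with hd
  set G : ℝ → ℝ := fun h => F (t₀ + h) - F t₀ - d * h with hG
  have hGo : G =o[𝓝 0] (fun h : ℝ => h) := by
    have := hasDerivAt_iff_isLittleO_nhds_zero.1 hder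
    refine this.congr_left fun h => ?_
    simp [hG, mul_comm]
  have hGc : Continuous G := by fun_prop
  -- global linear bound
  obtain ⟨K, hK⟩ : ∃ K : ℝ, ∀ h, |G h| ≤ K * |h| := by
    have h1 := hGo.bound (show (0:ℝ) < 1 by norm_num)
    obtain ⟨δ, hδ, hball⟩ := Metric.eventually_nhds_iff.1 h1
    refine ⟨1 + 2 * M / δ + |d|, fun h => ?_⟩
    have hp : 0 ≤ 2 * M / δ := by positivity
    have hh := abs_nonneg h
    have hd0 := abs_nonneg d
    rcases lt_or_ge |h| δ with hlt | hge
    · have := hball (y := h) (by simpa using hlt)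
      simp only [Real.norm_eq_abs] at this
      nlinarith [mul_nonneg hp hh, mul_nonneg hd0 hh]
    · have h2 : |G h| ≤ |F (t₀ + h)| + |F t₀| + |d| * |h| := by
        rw [← abs_mul]
        exact (abs_sub _ _).trans (add_le_add (abs_sub _ _) le_rfl)
      have h3 := hFb (t₀ + h)
      have h4 := hFb t₀
      have h5 : 2 * M ≤ 2 * M / δ * |h| := by
        rw [div_mul_eq_mul_div, le_div_iff₀ hδ]
        exact mul_le_mul_of_nonneg_left hge (by positivity)
      nlinarith
  have hχ0 : ∫ y, χ y = 0 := by
    have := hΦ0 0 (Or.inl (inv_pos.2 hb0).le)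
    simpa using this
  -- isolating one frequency
  have hI : ∀ n : ℕ, ∫ y : ℝ, ((F (t₀ + y / b ^ n) : ℝ) : ℂ) * χ y =
      a ^ n * (Complex.exp (-((b ^ n * t₀ : ℝ) : ℂ) * Complex.I) / 2) := by
    intro n
    have hbn : 0 < b ^ n := pow_pos hb0 n
    set T : ℕ → ℝ → ℂ := fun m y =>
      ((a ^ m * Real.cos (b ^ m * (t₀ + y / b ^ n)) : ℝ) : ℂ) * χ y with hT
    have hTb : ∀ m y, ‖T m y‖ ≤ a ^ m * ‖χ y‖ := fun m y => by
      simp only [hT]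
      rw [norm_mul, Complex.norm_real]
      exact mul_le_mul_of_nonneg_right (hterm m _) (norm_nonneg _)
    have hTi : ∀ m, Integrable (T m) := fun m =>
      (hχ.norm.const_mul (a ^ m)).mono' (by
        simp only [hT]
        exact Continuous.aestronglyMeasurable (by fun_prop)) (Eventually.of_forall (hTb m))
    have hTs : Summable fun m => ∫ y, ‖T m y‖ := by
      refine Summable.of_nonneg_of_le (fun m => integral_nonneg fun y => norm_nonneg _)
        (fun m => ?_) (hgeo.mul_right (∫ y, ‖χ y‖))
      rw [← integral_const_mul]
      exact integral_mono (hTi m).norm (hχ.norm.const_mul _) (hTb m)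
    have hsum := hasSum_integral_of_summable_integral_norm hTi hTs
    have hlhs : ∀ y, ∑' m, T m y = ((F (t₀ + y / b ^ n) : ℝ) : ℂ) * χ y := by
      intro y
      simp only [hT, hF]
      rw [tsum_mul_right, Complex.ofReal_tsum]
    simp only [hlhs] at hsum
    have hval : ∀ m, ∫ y, T m y = a ^ m * (Complex.exp (-((b ^ m * t₀ : ℝ) : ℂ) * Complex.I) / 2 *
        ∫ y : ℝ, Complex.exp (-((b ^ m / b ^ n) * y : ℝ) * Complex.I) * χ y) := by
      intro m
      have hl : 0 < b ^ m / b ^ n := by positivity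
      have h1 := w_cos_integral χ hχ (b ^ m * t₀) (b ^ m / b ^ n)
      rw [hΦ0 (-(b ^ m / b ^ n)) (Or.inl (by linarith [inv_pos.2 hb0])), mul_zero, zero_add] at h1
      rw [← h1, ← integral_const_mul]
      congr 1
      ext y
      simp only [hT]
      rw [show b ^ m * (t₀ + y / b ^ n) = b ^ m * t₀ + b ^ m / b ^ n * y by ring]
      push_cast; ring
    rw [← hsum.tsum_eq, tsum_eq_single n]
    · rw [hval n, div_self hbn.ne']
      simp only [one_mul]
      rw [hΦ1, mul_one]
    · intro m hm
      rw [hval m, hΦ0, mul_zero, mul_zero]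
      rcases lt_or_gt_of_ne hm with h | h
      · left
        rw [div_le_iff₀ hbn, inv_mul_eq_div, le_div_iff₀ hb0, ← pow_succ]
        exact pow_le_pow_right₀ hb.le h
      · right
        rw [le_div_iff₀ hbn, ← pow_succ']
        exact pow_le_pow_right₀ hb.le h
  have hJ : ∀ n : ℕ, ∫ y : ℝ, ((b ^ n * G (y / b ^ n) : ℝ) : ℂ) * χ y =
      (b ^ n : ℝ) * (a ^ n * (Complex.exp (-((b ^ n * t₀ : ℝ) : ℂ) * Complex.I) / 2)) := by
    intro n
    have hi1 : Integrable fun y : ℝ => ((F (t₀ + y / b ^ n) : ℝ) : ℂ) * χ y := by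
      refine hχ.bdd_mul (c := M) (Continuous.aestronglyMeasurable (by fun_prop))
        (Eventually.of_forall fun y => ?_)
      rw [Complex.norm_real]; exact hFb _
    rw [← hI n, ← integral_const_mul]
    have : ∀ y : ℝ, ((b ^ n * G (y / b ^ n) : ℝ) : ℂ) * χ y =
        ((b ^ n : ℝ) : ℂ) * (((F (t₀ + y / b ^ n) : ℝ) : ℂ) * χ y)
          - (((b ^ n * F t₀ : ℝ) : ℂ) * χ y + (d : ℂ) * ((y : ℂ) * χ y)) := by
      intro y
      have hbn : (b : ℂ) ^ n ≠ 0 := pow_ne_zero _ (by exact_mod_cast hb0.ne')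
      simp only [hG]
      push_cast
      field_simp
      ring
    simp only [this]
    have hi2 : Integrable fun y : ℝ => ((b ^ n * F t₀ : ℝ) : ℂ) * χ y + (d : ℂ) * ((y : ℂ) * χ y) :=
      (hχ.const_mul _).add (hyχ.const_mul _)
    have hz : ∫ y : ℝ, (((b ^ n * F t₀ : ℝ) : ℂ) * χ y + (d : ℂ) * ((y : ℂ) * χ y)) = 0 := by
      rw [integral_add (hχ.const_mul _) (hyχ.const_mul _), integral_const_mul, integral_const_mul,
        hχ0, hyχ0]
      simp
    rw [integral_sub (hi1.const_mul _) hi2, hz, sub_zero]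
  have hnorm : ∀ n : ℕ, (1 / 2 : ℝ) ≤ ‖∫ y : ℝ, ((b ^ n * G (y / b ^ n) : ℝ) : ℂ) * χ y‖ := by
    intro n
    rw [hJ n, norm_mul, norm_mul, norm_div, ← Complex.ofReal_neg, Complex.norm_exp_ofReal_mul_I,
      Complex.norm_real, norm_pow, norm_pow, Complex.norm_real, Real.norm_of_nonneg hb0.le,
      Real.norm_of_nonneg ha0.le, ← mul_assoc, ← mul_pow, mul_comm b a]
    have := one_le_pow₀ hab.le (n := n)
    simp only [Complex.norm_ofNat]
    linarith
  have hlim : Tendsto (fun n : ℕ => ∫ y : ℝ, ((b ^ n * G (y / b ^ n) : ℝ) : ℂ) * χ y)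
      atTop (𝓝 (∫ _ : ℝ, (0 : ℂ))) := by
    refine tendsto_integral_of_dominated_convergence (fun y => K * ‖(y : ℂ) * χ y‖)
      (fun n => Continuous.aestronglyMeasurable (by fun_prop)) (hyχ.norm.const_mul K)
      (fun n => Eventually.of_forall fun y => ?_) (Eventually.of_forall fun y => ?_)
    · have hbn : 0 < b ^ n := pow_pos hb0 n
      rw [norm_mul, norm_mul, Complex.norm_real, Complex.norm_real, ← mul_assoc, norm_mul,
        Real.norm_of_nonneg hbn.le]
      refine mul_le_mul_of_nonneg_right ?_ (norm_nonneg _)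
      have := mul_le_mul_of_nonneg_left (hK (y / b ^ n)) hbn.le
      refine this.trans (le_of_eq ?_)
      rw [abs_div, abs_of_pos hbn, Real.norm_eq_abs]
      field_simp
    · have hy : Tendsto (fun n : ℕ => y / b ^ n) atTop (𝓝 0) :=
        (tendsto_pow_atTop_atTop_of_one_lt hb).const_div_atTop y
      have h1 := hGo.comp_tendsto hy
      have h2 : Tendsto (fun n : ℕ => b ^ n * G (y / b ^ n)) atTop (𝓝 0) := by
        rw [← Asymptotics.isLittleO_one_iff ℝ]
        have h3 := (Asymptotics.isBigO_refl (fun n : ℕ => b ^ n) atTop).mul_isLittleO h1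
        refine h3.trans_isBigO ?_
        refine Asymptotics.IsBigO.of_bound |y| (Eventually.of_forall fun n => ?_)
        have hbn : 0 < b ^ n := pow_pos hb0 n
        simp only [Function.comp]
        rw [mul_div_cancel₀ _ hbn.ne']
        simp
      have h4 := ((Complex.continuous_ofReal.tendsto 0).comp h2).mul_const (χ y)
      simpa [Function.comp_def] using h4
  have hlim' := hlim.norm
  simp only [integral_zero, norm_zero] at hlim'
  have := ge_of_tendsto' hlim' hnorm
  norm_num at this


/-- For `0 < a < 1` with `a b > 1`, the Weierstrass function
`F_{a,b}(t) = ∑_{n=0}^∞ aⁿ cos(bⁿ t)` is nowhere differentiable, and it is uniformly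
Hölder continuous with exponent `s = -ln a / ln b`. -/
theorem weierstrass_nowhere_differentiable_holder (a b : ℝ) (ha0 : 0 < a) (ha1 : a < 1)
    (hab : 1 < a * b) :
    (∀ t : ℝ, ¬ DifferentiableAt ℝ (fun t : ℝ => ∑' n : ℕ, a ^ n * Real.cos (b ^ n * t)) t)
      ∧ ∃ C > (0 : ℝ), ∀ t t₀ : ℝ,
          |(∑' n : ℕ, a ^ n * Real.cos (b ^ n * t)) -
              (∑' n : ℕ, a ^ n * Real.cos (b ^ n * t₀))| ≤
            C * |t - t₀| ^ (-Real.log a / Real.log b) := by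
  exact ⟨w_nowhere a b ha0 ha1 hab, w_holder a b ha0 ha1 hab⟩
end
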